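/- arXiv:1805.00260 — 2 statements merged into one kernel-verified Lean document; each statement's English description precedes it below -/
import Mathlib

section
/- Let G(m,n) denote the Cartesian product of a path on m vertices and a path on n vertices. For all integers m,n ≥ 2: š(G(m,n)) = 1 if m = n = 2; š(G(m,n)) = 2 if min{m,n} = 2 and max{m,n} ≥ 3; š(G(m,n)) = 3 if m,n ≥ 3 and m·n is even; and š(G(m,n)) = 5 if m,n ≥ 3 and m·n is odd. -/
open SimpleGraph Finset

/-- A proper edge coloring of `G` with colors in `ℕ`: distinct edges of `G`
sharing an endpoint receive distinct colors. -/
def IsProperEdgeColoring {V : Type*} (G : SimpleGraph V) (c : Sym2 V → ℕ) : Prop :=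
  ∀ e₁ ∈ G.edgeSet, ∀ e₂ ∈ G.edgeSet, e₁ ≠ e₂ → (∃ v, v ∈ e₁ ∧ v ∈ e₂) → c e₁ ≠ c e₂

/-- The palette of a vertex `v`: the set of colors appearing on edges of `G` incident with `v`. -/
def palette {V : Type*} (G : SimpleGraph V) (c : Sym2 V → ℕ) (v : V) : Set ℕ :=
  {n | ∃ e ∈ G.edgeSet, v ∈ e ∧ c e = n}

/-- The palette index of `G`: the minimum number of distinct palettes occurring in a
proper edge coloring of `G`. -/
noncomputable def paletteIndex {V : Type*} (G : SimpleGraph V) : ℕ :=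
  sInf {k | ∃ c : Sym2 V → ℕ, IsProperEdgeColoring G c ∧ (Set.range (palette G c)).ncard = k}

/-!
Vertices of different degrees have different palettes, so the number of degrees is a lower bound.
If `m * n` is even, it is attained by a coloring in which every vertex of degree `d` has the
palette `{1, …, d}`: start from two rows and repeatedly insert two rows below the first one.

If `m` and `n` are odd, give the vertex `(i, j)` the weight `(-1) ^ (i + j)`. The edges of a fixed
color match the vertices that see this color in pairs of opposite weights, so these vertices have
total weight `0`, whereas the vertices of degree `2`, `3` and `4` have total weights `4`, `-4` and
`1`. Four palettes cannot satisfy these constraints. Five suffice: a coloring of the `3 × 3` grid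
extends two columns or two rows at a time without creating new palettes.
-/

section Palettes

variable {V : Type*} {G : SimpleGraph V} {c : Sym2 V → ℕ}

lemma mem_palette {v : V} {x : ℕ} : x ∈ palette G c v ↔ ∃ w, G.Adj v w ∧ c s(v, w) = x := by
  constructor
  · rintro ⟨e, he, hv, rfl⟩
    obtain ⟨w, rfl⟩ := Sym2.mem_iff_exists.1 hv
    exact ⟨w, he, rfl⟩
  · rintro ⟨w, hw, rfl⟩
    exact ⟨s(v, w), hw, Sym2.mem_mk_left v w, rfl⟩

lemma isProperEdgeColoring_iff_injOn :
    IsProperEdgeColoring G c ↔ ∀ v, Set.InjOn (fun w ↦ c s(v, w)) (G.neighborSet v) := by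
  constructor
  · intro hc v a ha b hb hab
    by_contra hne
    exact hc s(v, a) ha s(v, b) hb (fun h ↦ hne (Sym2.congr_right.1 h))
      ⟨v, Sym2.mem_mk_left v a, Sym2.mem_mk_left v b⟩ hab
  · rintro hc e₁ he₁ e₂ he₂ hne ⟨v, hv₁, hv₂⟩ heq
    obtain ⟨a, rfl⟩ := Sym2.mem_iff_exists.1 hv₁
    obtain ⟨b, rfl⟩ := Sym2.mem_iff_exists.1 hv₂
    exact hne (congrArg _ (hc v he₁ he₂ heq))

lemma exists_isProperEdgeColoring [Countable V] (G : SimpleGraph V) :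
    ∃ c, IsProperEdgeColoring G c := by
  have : Countable (Sym2 V) := Quotient.countable
  obtain ⟨c, hc⟩ := exists_injective_nat (Sym2 V)
  exact ⟨c, fun _ _ _ _ hne _ ↦ hc.ne hne⟩

lemma paletteIndex_le (hc : IsProperEdgeColoring G c) :
    paletteIndex G ≤ (Set.range (palette G c)).ncard :=
  Nat.sInf_le ⟨c, hc, rfl⟩

lemma le_paletteIndex [Countable V] {k : ℕ}
    (hk : ∀ c, IsProperEdgeColoring G c → k ≤ (Set.range (palette G c)).ncard) :
    k ≤ paletteIndex G := by
  obtain ⟨c, hc⟩ := exists_isProperEdgeColoring G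
  refine le_csInf ⟨_, c, hc, rfl⟩ ?_
  rintro _ ⟨c, hc, rfl⟩
  exact hk c hc

/-- The palette of `v` as a finite set, for a graph whose vertices have finite degree. -/
def paletteFinset (G : SimpleGraph V) [G.LocallyFinite] (c : Sym2 V → ℕ) (v : V) : Finset ℕ :=
  (G.neighborFinset v).image fun w ↦ c s(v, w)

section LocallyFinite

variable [G.LocallyFinite]

lemma mem_paletteFinset {v : V} {x : ℕ} :
    x ∈ paletteFinset G c v ↔ ∃ w, G.Adj v w ∧ c s(v, w) = x := by
  simp [paletteFinset]

lemma coe_paletteFinset (v : V) : (paletteFinset G c v : Set ℕ) = palette G c v := by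
  ext x
  rw [mem_coe, mem_paletteFinset, mem_palette]

lemma isProperEdgeColoring_iff_card_paletteFinset :
    IsProperEdgeColoring G c ↔ ∀ v, #(paletteFinset G c v) = G.degree v := by
  simp_rw [isProperEdgeColoring_iff_injOn, paletteFinset, degree, card_image_iff,
    coe_neighborFinset]

lemma paletteIndex_le_card {T : Finset (Finset ℕ)} (hc : IsProperEdgeColoring G c)
    (hT : ∀ v, paletteFinset G c v ∈ T) : paletteIndex G ≤ #T := by
  have hrange : Set.range (palette G c) ⊆ (↑) '' (T : Set (Finset ℕ)) :=
    Set.range_subset_iff.2 fun v ↦ ⟨_, hT v, coe_paletteFinset v⟩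
  calc paletteIndex G ≤ (Set.range (palette G c)).ncard := paletteIndex_le hc
    _ ≤ ((↑) '' (T : Set (Finset ℕ)) : Set (Set ℕ)).ncard :=
        Set.ncard_le_ncard hrange (T.finite_toSet.image _)
    _ ≤ (T : Set (Finset ℕ)).ncard := Set.ncard_image_le T.finite_toSet
    _ = #T := Set.ncard_coe_finset T

end LocallyFinite

section Fintype

variable [Fintype V] [G.LocallyFinite]

lemma ncard_range_palette :
    (Set.range (palette G c)).ncard = #(univ.image (paletteFinset G c)) := by
  have hrange : Set.range (palette G c) =
      (↑) '' (univ.image (paletteFinset G c) : Set (Finset ℕ)) := by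
    ext s
    simp [coe_paletteFinset]
  rw [hrange, Set.ncard_image_of_injective _ coe_injective, Set.ncard_coe_finset]

lemma card_image_degree_le_paletteIndex : #(univ.image (G.degree ·)) ≤ paletteIndex G := by
  refine le_paletteIndex fun c hc ↦ ?_
  have hdeg : univ.image (G.degree ·) = (univ.image (paletteFinset G c)).image card := by
    rw [image_image]
    exact image_congr fun v _ ↦ (isProperEdgeColoring_iff_card_paletteFinset.1 hc v).symm
  rw [hdeg, ncard_range_palette]
  exact card_image_le

lemma paletteIndex_eq_card_image_degree (hc : ∀ v, paletteFinset G c v = Icc 1 (G.degree v)) :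
    paletteIndex G = #(univ.image (G.degree ·)) := by
  refine le_antisymm ?_ card_image_degree_le_paletteIndex
  have hproper : IsProperEdgeColoring G c :=
    isProperEdgeColoring_iff_card_paletteFinset.2 fun v ↦ by simp [hc]
  have hT : ∀ v, paletteFinset G c v ∈ (univ.image (G.degree ·)).image (Icc 1) := fun v ↦
    hc v ▸ mem_image_of_mem _ (mem_image_of_mem _ (mem_univ v))
  exact (paletteIndex_le_card hproper hT).trans card_image_le

-- The vertices that see the color `x` are perfectly matched by the edges of color `x`.
lemma sum_filter_mem_paletteFinset_eq_zero {M : Type*} [AddCommMonoid M] {w : V → M}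
    (hc : IsProperEdgeColoring G c) (hw : ∀ u v, G.Adj u v → w u + w v = 0) (x : ℕ) :
    ∑ v with x ∈ paletteFinset G c v, w v = 0 := by
  have hpartner : ∀ v ∈ ({v | x ∈ paletteFinset G c v} : Finset V),
      ∃ u, G.Adj v u ∧ c s(v, u) = x := fun v hv ↦ mem_paletteFinset.1 (mem_filter.1 hv).2
  choose partner hadj hcolor using hpartner
  refine sum_involution partner (fun v hv ↦ hw _ _ (hadj v hv))
    (fun v hv _ h ↦ (hadj v hv).ne h.symm) (fun v hv ↦ ?_) (fun v hv ↦ ?_)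
  · refine mem_filter.2 ⟨mem_univ _, mem_paletteFinset.2 ⟨v, (hadj v hv).symm, ?_⟩⟩
    rw [Sym2.eq_swap, hcolor]
  · refine isProperEdgeColoring_iff_injOn.1 hc _ (hadj _ _) (hadj v hv).symm ?_
    simp only [hcolor]
    rw [Sym2.eq_swap, hcolor]

end Fintype

end Palettes

section BoxProd

variable {α β : Type*} {G : SimpleGraph α} {H : SimpleGraph β}

/-- The edge coloring of a box product that colors the copy `G × {b}` of the first factor by `c b`
and the copy `{a} × H` of the second factor by `d a`; pairs that are not edges of any box product
get the color `0`. -/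
def boxProdColoring [DecidableEq α] [DecidableEq β] (c : β → Sym2 α → ℕ) (d : α → Sym2 β → ℕ) :
    Sym2 (α × β) → ℕ :=
  Sym2.lift ⟨fun p q ↦ if p.1 = q.1 then d p.1 s(p.2, q.2)
    else if p.2 = q.2 then c p.2 s(p.1, q.1) else 0, fun p q ↦ by
      simp only [Sym2.eq_swap (a := q.1), Sym2.eq_swap (a := q.2), eq_comm (a := q.1),
        eq_comm (a := q.2)]
      split_ifs with h₁ h₂ <;> simp [*]⟩

lemma palette_boxProdColoring [DecidableEq α] [DecidableEq β] (c : β → Sym2 α → ℕ)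
    (d : α → Sym2 β → ℕ) (p : α × β) :
    palette (G □ H) (boxProdColoring c d) p = palette G (c p.2) p.1 ∪ palette H (d p.1) p.2 := by
  obtain ⟨a, b⟩ := p
  ext x
  simp only [Set.mem_union, mem_palette, Prod.exists, boxProd_adj, boxProdColoring, Sym2.lift_mk]
  constructor
  · rintro ⟨a', b', ⟨hadj, rfl⟩ | ⟨hadj, rfl⟩, hx⟩
    · exact .inl ⟨a', hadj, by simpa [hadj.ne] using hx⟩
    · exact .inr ⟨b', hadj, by simpa using hx⟩
  · rintro (⟨a', hadj, hx⟩ | ⟨b', hadj, hx⟩)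
    · exact ⟨a', b, .inl ⟨hadj, rfl⟩, by simpa [hadj.ne] using hx⟩
    · exact ⟨a, b', .inr ⟨hadj, rfl⟩, by simpa using hx⟩

variable [Fintype α] [Fintype β] [G.LocallyFinite] [H.LocallyFinite]

open scoped Pointwise in
lemma image_degree_boxProd :
    univ.image ((G □ H).degree ·) = univ.image (G.degree ·) + univ.image (H.degree ·) := by
  ext d
  simp [mem_add, degree_boxProd]

lemma sum_filter_degree_boxProd_eq {R : Type*} [NonUnitalNonAssocSemiring R] (f : α → R)
    (g : β → R) (k : ℕ) :
    ∑ p with (G □ H).degree p = k, f p.1 * g p.2 =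
      ∑ d ∈ antidiagonal k,
        (∑ a with G.degree a = d.1, f a) * ∑ b with H.degree b = d.2, g b := by
  have hmaps : ∀ p ∈ ({p | (G □ H).degree p = k} : Finset (α × β)),
      (G.degree p.1, H.degree p.2) ∈ antidiagonal k := fun p hp ↦ by
    rw [HasAntidiagonal.mem_antidiagonal, ← degree_boxProd p]
    exact (mem_filter.1 hp).2
  rw [← sum_fiberwise_of_maps_to hmaps]
  refine sum_congr rfl fun d hd ↦ ?_
  rw [sum_mul_sum, ← sum_product', ← filter_product, univ_product_univ, filter_filter]
  refine sum_congr (filter_congr fun p _ ↦ ?_) fun _ _ ↦ rfl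
  rw [Prod.ext_iff, degree_boxProd, and_iff_right_iff_imp]
  rintro ⟨h₁, h₂⟩
  rw [← HasAntidiagonal.mem_antidiagonal.1 hd, ← h₁, ← h₂]

end BoxProd

section PathGraph

instance (m : ℕ) : DecidableRel (pathGraph m).Adj :=
  fun _ _ ↦ decidable_of_iff' _ pathGraph_adj

/-- The degree of the vertex `i` in the path on the vertices `0, …, m - 1`, provided `2 ≤ m`. -/
def pathDegree (m i : ℕ) : ℕ := if i = 0 ∨ i + 1 = m then 1 else 2

lemma degree_pathGraph {m : ℕ} (hm : 2 ≤ m) (i : Fin m) :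
    (pathGraph m).degree i = pathDegree m i := by
  obtain ⟨i, hi⟩ := i
  rw [← card_neighborFinset_eq_degree, pathDegree]
  obtain h | h | ⟨h₀, h₁⟩ : i = 0 ∨ i + 1 = m ∨ (i ≠ 0 ∧ i + 1 ≠ m) := by omega
  · rw [if_pos (.inl h), card_eq_one]
    refine ⟨⟨1, by omega⟩, ?_⟩
    ext ⟨j, hj⟩
    simp only [mem_neighborFinset, pathGraph_adj, mem_singleton, Fin.mk.injEq]
    omega
  · rw [if_pos (.inr h), card_eq_one]
    refine ⟨⟨i - 1, by omega⟩, ?_⟩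
    ext ⟨j, hj⟩
    simp only [mem_neighborFinset, pathGraph_adj, mem_singleton, Fin.mk.injEq]
    omega
  · rw [if_neg (not_or.2 ⟨h₀, h₁⟩), card_eq_two]
    refine ⟨⟨i - 1, by omega⟩, ⟨i + 1, by omega⟩, by simp only [ne_eq, Fin.mk.injEq]; omega, ?_⟩
    ext ⟨j, hj⟩
    simp only [mem_neighborFinset, pathGraph_adj, mem_insert, mem_singleton, Fin.mk.injEq]
    omega

lemma image_degree_pathGraph {m : ℕ} (hm : 2 ≤ m) :
    univ.image ((pathGraph m).degree ·) = if m = 2 then {1} else {1, 2} := by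
  simp only [degree_pathGraph hm]
  ext d
  simp only [mem_image, mem_univ, true_and, pathDegree]
  constructor
  · rintro ⟨i, rfl⟩
    have := i.2
    grind
  · have hend : ∃ i : Fin m, (if i.1 = 0 ∨ i.1 + 1 = m then 1 else 2) = 1 :=
      ⟨⟨0, by omega⟩, by simp⟩
    have hinner (h : m ≠ 2) : ∃ i : Fin m, (if i.1 = 0 ∨ i.1 + 1 = m then 1 else 2) = 2 :=
      ⟨⟨1, by omega⟩, by simp; omega⟩
    grind

lemma pathDegree_eq_one_or_two (m i : ℕ) : pathDegree m i = 1 ∨ pathDegree m i = 2 := by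
  unfold pathDegree
  split_ifs <;> simp

lemma pathDegree_eq_one_iff {m i : ℕ} : pathDegree m i = 1 ↔ i = 0 ∨ i + 1 = m := by
  unfold pathDegree
  split_ifs with h <;> simp [h]

lemma pathDegree_add_two_add_three (m i : ℕ) :
    pathDegree (m + 2) (i + 3) = pathDegree m (i + 1) := by
  simp [pathDegree]

lemma sum_filter_pathDegree_eq_one {m : ℕ} (hm : 3 ≤ m) (hodd : Odd m) :
    ∑ i ∈ univ.filter (fun i : Fin m ↦ pathDegree m i = 1), (-1 : ℤ) ^ (i : ℕ) = 2 := by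
  have hends : univ.filter (fun i : Fin m ↦ pathDegree m i = 1) =
      {⟨0, by omega⟩, ⟨m - 1, by omega⟩} := by
    ext i
    simp only [mem_filter_univ, pathDegree_eq_one_iff, mem_insert, mem_singleton, Fin.ext_iff]
    omega
  have hne : (⟨0, by omega⟩ : Fin m) ≠ ⟨m - 1, by omega⟩ := by
    rw [ne_eq, Fin.mk.injEq]
    omega
  rw [hends, sum_pair hne, pow_zero, (hodd.tsub_odd odd_one).neg_one_pow]
  norm_num

lemma sum_filter_degree_pathGraph_neg_one_pow {m : ℕ} (hm : 3 ≤ m) (hodd : Odd m) (d : ℕ) :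
    ∑ i with (pathGraph m).degree i = d, (-1 : ℤ) ^ (i : ℕ) =
      if d = 1 then 2 else if d = 2 then -1 else 0 := by
  simp only [degree_pathGraph (by omega : 2 ≤ m)]
  split_ifs with h₁ h₂
  · rw [h₁, sum_filter_pathDegree_eq_one hm hodd]
  · have htotal := sum_filter_add_sum_filter_not univ (fun i : Fin m ↦ pathDegree m i = 1)
      (fun i ↦ (-1 : ℤ) ^ (i : ℕ))
    have hinner : univ.filter (fun i : Fin m ↦ pathDegree m i = d) =
        univ.filter fun i : Fin m ↦ ¬pathDegree m i = 1 :=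
      filter_congr fun i _ ↦ by have := pathDegree_eq_one_or_two m i; omega
    rw [sum_filter_pathDegree_eq_one hm hodd, Fin.sum_neg_one_pow,
      if_neg (Nat.not_even_iff_odd.2 hodd)] at htotal
    rw [hinner]
    linarith
  · refine sum_eq_zero fun i hi ↦ ?_
    have := pathDegree_eq_one_or_two m i
    have := (mem_filter.1 hi).2
    omega

end PathGraph

section Grid

variable {m n : ℕ}

lemma degree_grid (hm : 2 ≤ m) (hn : 2 ≤ n) (p : Fin m × Fin n) :
    (pathGraph m □ pathGraph n).degree p = pathDegree m p.1 + pathDegree n p.2 := by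
  rw [degree_boxProd, degree_pathGraph hm, degree_pathGraph hn]

lemma card_image_degree_grid (hm : 2 ≤ m) (hn : 2 ≤ n) :
    #(univ.image ((pathGraph m □ pathGraph n).degree ·)) =
      if m = 2 ∧ n = 2 then 1 else if min m n = 2 then 2 else 3 := by
  rw [image_degree_boxProd, image_degree_pathGraph hm, image_degree_pathGraph hn]
  by_cases hm₂ : m = 2 <;> by_cases hn₂ : n = 2
  · simp [hm₂, hn₂]
  · rw [if_pos hm₂, if_neg hn₂, if_neg (by omega), if_pos (by omega)]
    rfl
  · rw [if_neg hm₂, if_pos hn₂, if_neg (by omega), if_pos (by omega)]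
    rfl
  · rw [if_neg hm₂, if_neg hn₂, if_neg (by omega), if_neg (by omega)]
    rfl

end Grid

section OddLowerBound

open scoped FinsetFamily

section PaletteWeight

variable {V : Type*} [Fintype V] {G : SimpleGraph V} [G.LocallyFinite] {c : Sym2 V → ℕ}

/-- The total weight of the vertices whose palette is `P`. -/
def paletteWeight (G : SimpleGraph V) [G.LocallyFinite] (c : Sym2 V → ℕ) (w : V → ℤ)
    (P : Finset ℕ) : ℤ :=
  ∑ v with paletteFinset G c v = P, w v

lemma sum_filter_paletteWeight (w : V → ℤ) (p : Finset ℕ → Prop) [DecidablePred p] :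
    ∑ P ∈ univ.image (paletteFinset G c) with p P, paletteWeight G c w P =
      ∑ v with p (paletteFinset G c v), w v := by
  simp only [paletteWeight]
  rw [sum_fiberwise_eq_sum_filter]
  simp

lemma sum_slice_paletteWeight (hc : IsProperEdgeColoring G c) (w : V → ℤ) (k : ℕ) :
    ∑ P ∈ (univ.image (paletteFinset G c)) # k, paletteWeight G c w P =
      ∑ v with G.degree v = k, w v := by
  rw [slice, sum_filter_paletteWeight]
  simp only [isProperEdgeColoring_iff_card_paletteFinset.1 hc]

end PaletteWeight

/-- The constraints that the checkerboard weights `(-1) ^ (i + j)` impose on the palettes of a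
properly colored grid with an odd number of rows and of columns: `𝒜` is the set of palettes and
`E P` the total weight of the vertices with palette `P`. -/
structure IsOddGridWeight {α : Type*} [DecidableEq α] (𝒜 : Finset (Finset α))
    (E : Finset α → ℤ) : Prop where
  card_mem : ∀ P ∈ 𝒜, #P ∈ ({2, 3, 4} : Finset ℕ)
  sum_two : ∑ P ∈ 𝒜 # 2, E P = 4
  sum_three : ∑ P ∈ 𝒜 # 3, E P = -4
  sum_four : ∑ P ∈ 𝒜 # 4, E P = 1
  nonneg_of_mem_slice_two : ∀ P ∈ 𝒜 # 2, 0 ≤ E P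
  sum_mem_eq_zero : ∀ x, ∑ P ∈ 𝒜 with x ∈ P, E P = 0

namespace IsOddGridWeight

variable {α : Type*} [DecidableEq α] {𝒜 : Finset (Finset α)} {E : Finset α → ℤ}

lemma sum_slices (hE : IsOddGridWeight 𝒜 E) {M : Type*} [AddCommMonoid M] (f : Finset α → M) :
    ∑ P ∈ 𝒜 # 2, f P + ∑ P ∈ 𝒜 # 3, f P + ∑ P ∈ 𝒜 # 4, f P = ∑ P ∈ 𝒜, f P := by
  rw [← sum_fiberwise_of_maps_to hE.card_mem f]
  simp [slice, add_assoc]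

lemma sum_slices_mem (hE : IsOddGridWeight 𝒜 E) (x : α) :
    (∑ P ∈ 𝒜 # 2, if x ∈ P then E P else 0) + (∑ P ∈ 𝒜 # 3, if x ∈ P then E P else 0) +
      (∑ P ∈ 𝒜 # 4, if x ∈ P then E P else 0) = 0 := by
  rw [hE.sum_slices, ← sum_filter, hE.sum_mem_eq_zero]

-- A color of the 4-palette missing from the 3-palette occurs with positive total weight.
lemma card_slice_four_ne_one_of_three (hE : IsOddGridWeight 𝒜 E) (h₃ : #(𝒜 # 3) = 1) :
    #(𝒜 # 4) ≠ 1 := by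
  intro h₄
  obtain ⟨R, hR⟩ := card_eq_one.1 h₃
  obtain ⟨P, hP⟩ := card_eq_one.1 h₄
  have hR_card : #R = 3 := (mem_slice.1 (hR ▸ mem_singleton_self R)).2
  have hP_card : #P = 4 := (mem_slice.1 (hP ▸ mem_singleton_self P)).2
  obtain ⟨x, hxP, hxR⟩ := exists_mem_notMem_of_card_lt_card (by omega : #R < #P)
  have hsum := hE.sum_slices_mem x
  have hnonneg : 0 ≤ ∑ Q ∈ 𝒜 # 2, if x ∈ Q then E Q else 0 :=
    sum_nonneg fun Q hQ ↦ ite_nonneg (hE.nonneg_of_mem_slice_two Q hQ) le_rfl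
  have hEP := hE.sum_four
  rw [hP, sum_singleton] at hEP
  rw [hR, hP, sum_singleton, sum_singleton, if_neg hxR, if_pos hxP, hEP] at hsum
  omega

-- Modulo 4, only the two 4-palettes contribute to a color, so both have weight 0; their sum is 1.
lemma card_slice_four_ne_two (hE : IsOddGridWeight 𝒜 E) (h₂ : #(𝒜 # 2) = 1)
    (h₃ : #(𝒜 # 3) = 1) : #(𝒜 # 4) ≠ 2 := by
  intro h₄
  obtain ⟨Q, hQ⟩ := card_eq_one.1 h₂
  obtain ⟨R, hR⟩ := card_eq_one.1 h₃
  obtain ⟨P, P', hne, hP⟩ := card_eq_two.1 h₄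
  have hEQ := hE.sum_two
  have hER := hE.sum_three
  have hEP := hE.sum_four
  have hmod (x : α) : 4 ∣ (if x ∈ P then E P else 0) + (if x ∈ P' then E P' else 0) := by
    have hsum := hE.sum_slices_mem x
    rw [hQ, hR, hP] at hsum
    rw [hQ] at hEQ
    rw [hR] at hER
    simp only [sum_singleton, sum_pair hne] at hsum hEQ hER
    split_ifs at hsum ⊢ <;> omega
  rw [hP, sum_pair hne] at hEP
  have hnonempty (S) (hS : S ∈ 𝒜 # 4) : S.Nonempty :=
    card_pos.1 (by rw [(mem_slice.1 hS).2]; norm_num)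
  obtain ⟨x, hx⟩ := hnonempty P (hP ▸ mem_insert_self P _)
  obtain ⟨y, hy⟩ := hnonempty P' (hP ▸ mem_insert_of_mem (mem_singleton_self P'))
  have hx_mod := hmod x
  have hy_mod := hmod y
  rw [if_pos hx] at hx_mod
  rw [if_pos hy] at hy_mod
  split_ifs at hx_mod hy_mod <;> omega

lemma card_slice_four_ne_one_of_two_of_three (hE : IsOddGridWeight 𝒜 E) (h₂ : #(𝒜 # 2) = 1)
    (h₃ : #(𝒜 # 3) = 2) : #(𝒜 # 4) ≠ 1 := by
  intro h₄
  obtain ⟨Q, hQ⟩ := card_eq_one.1 h₂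
  obtain ⟨R, S, hne, hRS⟩ := card_eq_two.1 h₃
  obtain ⟨P, hP⟩ := card_eq_one.1 h₄
  have hQ_card : #Q = 2 := (mem_slice.1 (hQ ▸ mem_singleton_self Q)).2
  have hR_card : #R = 3 := (mem_slice.1 (hRS ▸ mem_insert_self R _)).2
  have hS_card : #S = 3 := (mem_slice.1 (hRS ▸ mem_insert_of_mem (mem_singleton_self S))).2
  have hP_card : #P = 4 := (mem_slice.1 (hP ▸ mem_singleton_self P)).2
  have hEQ := hE.sum_two
  have hERS := hE.sum_three
  have hEP := hE.sum_four
  rw [hQ, sum_singleton] at hEQ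
  rw [hRS, sum_pair hne] at hERS
  rw [hP, sum_singleton] at hEP
  have hsum (x : α) (hx : x ∈ P) : (if x ∈ Q then 4 else 0) +
      ((if x ∈ R then E R else 0) + if x ∈ S then E S else 0) + 1 = 0 := by
    have h := hE.sum_slices_mem x
    rwa [hQ, hRS, hP, sum_singleton, sum_singleton, sum_pair hne, if_pos hx, hEQ, hEP] at h
  obtain ⟨x, hxP, hxQ⟩ := exists_mem_notMem_of_card_lt_card (by omega : #Q < #P)
  obtain ⟨y, hyP, hyR⟩ := exists_mem_notMem_of_card_lt_card (by omega : #R < #P)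
  obtain ⟨z, hzP, hzS⟩ := exists_mem_notMem_of_card_lt_card (by omega : #S < #P)
  have hx := hsum x hxP
  have hy := hsum y hyP
  have hz := hsum z hzP
  simp only [if_neg hxQ, if_neg hyR, if_neg hzS] at hx hy hz
  split_ifs at hx hy hz <;> omega

lemma five_le_card (hE : IsOddGridWeight 𝒜 E) : 5 ≤ #𝒜 := by
  have hpos (k : ℕ) (hk : ∑ P ∈ 𝒜 # k, E P ≠ 0) : 0 < #(𝒜 # k) :=
    card_pos.2 (nonempty_of_sum_ne_zero hk)
  have h₂ := hpos 2 (by rw [hE.sum_two]; norm_num)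
  have h₃ := hpos 3 (by rw [hE.sum_three]; norm_num)
  have h₄ := hpos 4 (by rw [hE.sum_four]; norm_num)
  have htotal : #(𝒜 # 2) + #(𝒜 # 3) + #(𝒜 # 4) = #𝒜 := by
    simp only [card_eq_sum_ones]
    exact hE.sum_slices fun _ ↦ 1
  have h₃₄ := hE.card_slice_four_ne_one_of_three
  have h₁₁₂ := hE.card_slice_four_ne_two
  have h₁₂₁ := hE.card_slice_four_ne_one_of_two_of_three
  by_contra hlt
  omega

end IsOddGridWeight

/-- The weight of a grid vertex that is `1` on one color class of the bipartition and `-1` on the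
other. -/
def checkerboard {m n : ℕ} (p : Fin m × Fin n) : ℤ := (-1) ^ (p.1 : ℕ) * (-1) ^ (p.2 : ℕ)

lemma checkerboard_add_checkerboard {m n : ℕ} {p q : Fin m × Fin n}
    (hpq : (pathGraph m □ pathGraph n).Adj p q) : checkerboard p + checkerboard q = 0 := by
  unfold checkerboard
  rcases boxProd_adj.1 hpq with ⟨hadj, heq⟩ | ⟨hadj, heq⟩ <;>
    rcases pathGraph_adj.1 hadj with hsucc | hsucc <;>
    rw [heq, ← hsucc, pow_succ] <;> ring

lemma checkerboard_eq_one {m n : ℕ} (hm : Odd m) (hn : Odd n) {p : Fin m × Fin n}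
    (hp₁ : pathDegree m p.1 = 1) (hp₂ : pathDegree n p.2 = 1) : checkerboard p = 1 := by
  have hend {k i : ℕ} (hk : Odd k) (hi : pathDegree k i = 1) : Even i := by
    rw [pathDegree_eq_one_iff] at hi
    grind
  rw [checkerboard, (hend hm hp₁).neg_one_pow, (hend hn hp₂).neg_one_pow, one_mul]

-- The coefficient of `X ^ k` in `(2 * X - X ^ 2) ^ 2 = 4 * X ^ 2 - 4 * X ^ 3 + X ^ 4`.
lemma sum_filter_degree_checkerboard {m n : ℕ} (hm : 3 ≤ m) (hn : 3 ≤ n) (hm_odd : Odd m)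
    (hn_odd : Odd n) (k : ℕ) :
    ∑ p : Fin m × Fin n with (pathGraph m □ pathGraph n).degree p = k, checkerboard p =
      ∑ d ∈ antidiagonal k, (if d.1 = 1 then 2 else if d.1 = 2 then -1 else 0) *
        (if d.2 = 1 then 2 else if d.2 = 2 then -1 else 0) := by
  simp only [checkerboard, sum_filter_degree_boxProd_eq (fun i : Fin m ↦ (-1 : ℤ) ^ (i : ℕ))
    (fun j : Fin n ↦ (-1) ^ (j : ℕ)), sum_filter_degree_pathGraph_neg_one_pow hm hm_odd,
    sum_filter_degree_pathGraph_neg_one_pow hn hn_odd]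

lemma isOddGridWeight_paletteWeight_checkerboard {m n : ℕ} (hm : 3 ≤ m) (hn : 3 ≤ n)
    (hm_odd : Odd m) (hn_odd : Odd n) {c : Sym2 (Fin m × Fin n) → ℕ}
    (hc : IsProperEdgeColoring (pathGraph m □ pathGraph n) c) :
    IsOddGridWeight (univ.image (paletteFinset (pathGraph m □ pathGraph n) c))
      (paletteWeight (pathGraph m □ pathGraph n) c checkerboard) := by
  have hcard (p) := (isProperEdgeColoring_iff_card_paletteFinset.1 hc p).trans
    (degree_grid (by omega) (by omega) p)
  have hdegree₁ (p : Fin m × Fin n) := pathDegree_eq_one_or_two m p.1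
  have hdegree₂ (p : Fin m × Fin n) := pathDegree_eq_one_or_two n p.2
  have hslice (k : ℕ) := (sum_slice_paletteWeight hc checkerboard k).trans
    (sum_filter_degree_checkerboard hm hn hm_odd hn_odd k)
  refine ⟨?_, hslice 2, hslice 3, hslice 4, ?_, fun x ↦ ?_⟩
  · simp only [forall_mem_image, mem_univ, true_implies, hcard, mem_insert, mem_singleton]
    intro p
    grind
  · refine fun P hP ↦ sum_nonneg fun p hp ↦ ?_
    have hp_card := hcard p
    rw [(mem_filter.1 hp).2, (mem_slice.1 hP).2] at hp_card
    rw [checkerboard_eq_one hm_odd hn_odd (by grind) (by grind)]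
    exact zero_le_one
  · rw [sum_filter_paletteWeight checkerboard (x ∈ ·)]
    exact sum_filter_mem_paletteFinset_eq_zero hc (fun _ _ ↦ checkerboard_add_checkerboard) x

lemma five_le_paletteIndex_grid {m n : ℕ} (hm : 3 ≤ m) (hn : 3 ≤ n) (hm_odd : Odd m)
    (hn_odd : Odd n) : 5 ≤ paletteIndex (pathGraph m □ pathGraph n) := by
  refine le_paletteIndex fun c hc ↦ ?_
  rw [ncard_range_palette]
  exact (isOddGridWeight_paletteWeight_checkerboard hm hn hm_odd hn_odd hc).five_le_card

end OddLowerBound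

section GridPaletteMap

/-- The edge coloring of the path on `0, …, m - 1` in which the edge `{i, i + 1}` has color
`f i`. -/
def pathColoring {m : ℕ} (f : ℕ → ℕ) (e : Sym2 (Fin m)) : ℕ := f e.inf

/-- The palette of the vertex `i` of the path on `0, …, m - 1` under `pathColoring f`. -/
def pathPalette (m : ℕ) (f : ℕ → ℕ) : ℕ → Finset ℕ
  | 0 => if 1 < m then {f 0} else ∅
  | i + 1 => if i + 2 < m then {f i, f (i + 1)} else {f i}

lemma palette_pathColoring {m : ℕ} (f : ℕ → ℕ) (i : Fin m) :
    palette (pathGraph m) (pathColoring f) i = pathPalette m f i := by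
  have hmem (x : ℕ) : x ∈ palette (pathGraph m) (pathColoring f) i ↔
      (∃ k, k + 1 = i.1 ∧ f k = x) ∨ (i.1 + 1 < m ∧ f i = x) := by
    simp only [mem_palette, pathGraph_adj, pathColoring, Sym2.inf_mk]
    constructor
    · rintro ⟨j, hsucc | hpred, rfl⟩
      · have hij : i ⊓ j = i := inf_eq_left.2 (by omega)
        exact .inr ⟨by omega, by rw [hij]⟩
      · have hij : i ⊓ j = j := inf_eq_right.2 (by omega)
        exact .inl ⟨j, hpred, by rw [hij]⟩
    · rintro (⟨k, hk, rfl⟩ | ⟨hi, rfl⟩)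
      · have hik : i ⊓ ⟨k, by omega⟩ = ⟨k, by omega⟩ := inf_eq_right.2 (show k ≤ i.1 by omega)
        exact ⟨⟨k, by omega⟩, .inr hk, by rw [hik]⟩
      · have hi_succ : i ⊓ ⟨i + 1, hi⟩ = i := inf_eq_left.2 (Fin.le_def.2 (Nat.le_succ i))
        exact ⟨⟨i + 1, hi⟩, .inl rfl, by rw [hi_succ]⟩
  obtain ⟨_ | i, hi⟩ := i <;> ext x <;> rw [hmem, pathPalette] <;> split_ifs <;> grind

lemma exists_insert_pathPalette_eq_Icc {n : ℕ} (hn : 2 ≤ n) :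
    ∃ row a : ℕ → ℕ, ∀ j < n,
      insert (a j) (pathPalette n row j) = Icc 1 (1 + pathDegree n j) := by
  refine ⟨fun j ↦ j % 2 + 1, fun j ↦ if j = 0 then 2 else if j + 1 = n then 2 - n % 2 else 3,
    fun j hj ↦ ?_⟩
  ext x
  rcases j with _ | j <;> grind [pathPalette, pathDegree]

/-- `π` is the map of palettes of some edge coloring of the `m × n` grid, given by colorings `h i`
of the rows and `v j` of the columns. -/
def IsGridPaletteMap (m n : ℕ) (π : ℕ → ℕ → Finset ℕ) : Prop :=
  ∃ h v : ℕ → ℕ → ℕ, ∀ i < m, ∀ j < n, pathPalette n (h i) j ∪ pathPalette m (v j) i = π i j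

namespace IsGridPaletteMap

variable {m n : ℕ} {π π' : ℕ → ℕ → Finset ℕ}

lemma exists_paletteFinset_eq (hπ : IsGridPaletteMap m n π) :
    ∃ c, ∀ p : Fin m × Fin n, paletteFinset (pathGraph m □ pathGraph n) c p = π p.1 p.2 := by
  obtain ⟨h, v, hhv⟩ := hπ
  refine ⟨boxProdColoring (fun j ↦ pathColoring (v j)) (fun i ↦ pathColoring (h i)), fun p ↦ ?_⟩
  rw [← hhv p.1 p.1.2 p.2 p.2.2, ← coe_inj, coe_paletteFinset, palette_boxProdColoring,
    palette_pathColoring, palette_pathColoring, coe_union, Set.union_comm]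

lemma swap (hπ : IsGridPaletteMap m n π) : IsGridPaletteMap n m fun i j ↦ π j i := by
  obtain ⟨h, v, hhv⟩ := hπ
  exact ⟨v, h, fun i hi j hj ↦ by rw [union_comm, hhv j hj i hi]⟩

-- The edges from the new first row to the second get the colors `a`, those from the second row to
-- the old first row the colors `b`; both new rows are colored by `row`.
lemma prepend_two_rows (hπ : IsGridPaletteMap m n π) (hm : 0 < m) (row a b : ℕ → ℕ)
    (hrow : ∀ j < n, insert (a j) (pathPalette n row j) = π 0 j)
    (h₀ : ∀ j < n, π' 0 j = π 0 j) (h₁ : ∀ j < n, π' 1 j = insert (b j) (π 0 j))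
    (h₂ : ∀ j < n, π' 2 j = insert (b j) (π 0 j))
    (h₃ : ∀ i, i + 1 < m → ∀ j < n, π' (i + 3) j = π (i + 1) j) :
    IsGridPaletteMap (m + 2) n π' := by
  obtain ⟨h, v, hhv⟩ := hπ
  refine ⟨fun | 0 | 1 => row | i + 2 => h i, fun j ↦ fun | 0 => a j | 1 => b j | i + 2 => v j i,
    fun i hi j hj ↦ ?_⟩
  match i with
  | 0 => simp [pathPalette, h₀ j hj, ← hrow j hj]
  | 1 => simp [pathPalette, h₁ j hj, ← hrow j hj, hm, union_comm, insert_comm]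
  | 2 =>
    have hpath : pathPalette (m + 2) (fun | 0 => a j | 1 => b j | i + 2 => v j i) 2 =
        insert (b j) (pathPalette m (v j) 0) := by
      simp only [pathPalette]
      grind
    rw [h₂ j hj, ← hhv 0 hm j hj, ← union_insert, ← hpath]
  | i + 3 =>
    rw [h₃ i (by omega) j hj, ← hhv (i + 1) (by omega) j hj]
    simp [pathPalette]

lemma prepend_two_rows_Icc (hπ : IsGridPaletteMap m n π) (hm : 0 < m) (hn : 2 ≤ n)
    (hπ₀ : ∀ j < n, π 0 j = Icc 1 (1 + pathDegree n j))
    (h₀ : ∀ j < n, π' 0 j = Icc 1 (1 + pathDegree n j))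
    (h₁ : ∀ j < n, π' 1 j = Icc 1 (2 + pathDegree n j))
    (h₂ : ∀ j < n, π' 2 j = Icc 1 (2 + pathDegree n j))
    (h₃ : ∀ i, i + 1 < m → ∀ j < n, π' (i + 3) j = π (i + 1) j) :
    IsGridPaletteMap (m + 2) n π' := by
  obtain ⟨row, a, hrow⟩ := exists_insert_pathPalette_eq_Icc hn
  have hinsert (j : ℕ) (hj : j < n) :
      insert (2 + pathDegree n j) (π 0 j) = Icc 1 (2 + pathDegree n j) := by
    rw [hπ₀ j hj, add_comm 2, add_comm 1]
    exact insert_Icc_right_eq_Icc_add_one (by omega)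
  exact hπ.prepend_two_rows hm row a (2 + pathDegree n ·)
    (fun j hj ↦ (hrow j hj).trans (hπ₀ j hj).symm) (fun j hj ↦ (h₀ j hj).trans (hπ₀ j hj).symm)
    (fun j hj ↦ (h₁ j hj).trans (hinsert j hj).symm)
    (fun j hj ↦ (h₂ j hj).trans (hinsert j hj).symm) h₃

end IsGridPaletteMap

end GridPaletteMap

section Even

variable {m n : ℕ}

lemma isGridPaletteMap_two (hn : 2 ≤ n) :
    IsGridPaletteMap 2 n fun i j ↦ Icc 1 (pathDegree 2 i + pathDegree n j) := by
  obtain ⟨row, a, hrow⟩ := exists_insert_pathPalette_eq_Icc hn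
  refine ⟨fun _ ↦ row, fun j _ ↦ a j, fun i hi j hj ↦ ?_⟩
  have hdegree : pathDegree 2 i = 1 := pathDegree_eq_one_iff.2 (by omega)
  have hpath : pathPalette 2 (fun _ ↦ a j) i = {a j} := by
    interval_cases i <;> rfl
  simp only [hdegree, hpath, ← hrow j hj]
  rw [union_comm, ← insert_eq]

lemma isGridPaletteMap_of_even (hm : 2 ≤ m) (hn : 2 ≤ n) (hm_even : Even m) :
    IsGridPaletteMap m n fun i j ↦ Icc 1 (pathDegree m i + pathDegree n j) := by
  obtain ⟨k, rfl⟩ : ∃ k, m = 2 * k + 2 := ⟨m / 2 - 1, by grind⟩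
  clear hm hm_even
  induction k with
  | zero => exact isGridPaletteMap_two hn
  | succ k ih =>
    refine ih.prepend_two_rows_Icc (by omega) hn ?_ ?_ ?_ ?_ fun i _ ↦ ?_ <;> intro j _
    · simp [pathDegree]
    · simp [pathDegree]
    · simp [pathDegree]
    · simp [pathDegree]
    · simp only [mul_add_one, pathDegree_add_two_add_three]

lemma isGridPaletteMap_of_even_mul (hm : 2 ≤ m) (hn : 2 ≤ n) (h_even : Even (m * n)) :
    IsGridPaletteMap m n fun i j ↦ Icc 1 (pathDegree m i + pathDegree n j) := by
  obtain hm_even | hn_even := Nat.even_mul.1 h_even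
  · exact isGridPaletteMap_of_even hm hn hm_even
  · simpa only [add_comm] using (isGridPaletteMap_of_even hn hm hn_even).swap

lemma paletteIndex_grid_of_even (hm : 2 ≤ m) (hn : 2 ≤ n) (h_even : Even (m * n)) :
    paletteIndex (pathGraph m □ pathGraph n) =
      #(univ.image ((pathGraph m □ pathGraph n).degree ·)) := by
  obtain ⟨c, hc⟩ := (isGridPaletteMap_of_even_mul hm hn h_even).exists_paletteFinset_eq
  exact paletteIndex_eq_card_image_degree fun p ↦ by rw [hc, degree_grid hm hn]

end Even

section OddUpperBound

/-- The palettes of a coloring of the `m × n` grid, for `m` and `n` odd and at least `3`, that has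
only five palettes: one corner and two boundary vertices of the row next to it deviate from the
palettes `{1, …, d}`, where `d` is the degree. -/
def oddPalette (m n i j : ℕ) : Finset ℕ :=
  if i + 1 = m ∧ j + 1 = n then {3, 4}
  else if i + 2 = m ∧ (j = 0 ∨ j + 1 = n) then {1, 2, 4}
  else Icc 1 (pathDegree m i + pathDegree n j)

lemma isGridPaletteMap_oddPalette_three_three : IsGridPaletteMap 3 3 (oddPalette 3 3) := by
  refine ⟨fun i j ↦ ([[2, 1], [4, 1], [1, 3]][i]!)[j]!,
    fun j i ↦ ([[1, 2], [3, 2], [2, 4]][j]!)[i]!, ?_⟩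
  decide

lemma oddPalette_first_column {n : ℕ} (hn : 2 ≤ n) (m i : ℕ) :
    oddPalette m n i 0 = oddPalette m 3 i 0 := by
  grind [oddPalette, pathDegree]

lemma oddPalette_inner_column {n j : ℕ} (hj : 0 < j) (hjn : j + 1 < n) (m i : ℕ) :
    oddPalette m n i j = oddPalette m 3 i 1 := by
  grind [oddPalette, pathDegree]

lemma isGridPaletteMap_oddPalette_three {n : ℕ} (hn : 3 ≤ n) (hn_odd : Odd n) :
    IsGridPaletteMap 3 n (oddPalette 3 n) := by
  obtain ⟨k, rfl⟩ : ∃ k, n = 2 * k + 3 := ⟨n / 2 - 1, by grind⟩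
  clear hn hn_odd
  induction k with
  | zero => exact isGridPaletteMap_oddPalette_three_three
  | succ k ih =>
    refine (ih.swap.prepend_two_rows (by omega) (fun j ↦ [1, 2][j]!) (fun j ↦ [2, 4, 1][j]!)
      (fun _ ↦ 3) ?_ ?_ ?_ ?_ fun i _ ↦ ?_).swap <;> intro j hj
    · rw [oddPalette_first_column (by omega)]
      interval_cases j <;> decide
    · exact (oddPalette_first_column (by omega) 3 j).trans
        (oddPalette_first_column (by omega) 3 j).symm
    · rw [oddPalette_first_column (by omega), oddPalette_inner_column one_pos (by omega)]
      interval_cases j <;> decide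
    · rw [oddPalette_first_column (by omega), oddPalette_inner_column two_pos (by omega)]
      interval_cases j <;> decide
    · simp only [oddPalette, mul_add_one, pathDegree_add_two_add_three]
      grind

lemma isGridPaletteMap_oddPalette {m n : ℕ} (hm : 3 ≤ m) (hn : 3 ≤ n) (hm_odd : Odd m)
    (hn_odd : Odd n) : IsGridPaletteMap m n (oddPalette m n) := by
  obtain ⟨k, rfl⟩ : ∃ k, m = 2 * k + 3 := ⟨m / 2 - 1, by grind⟩
  clear hm hm_odd
  induction k with
  | zero => exact isGridPaletteMap_oddPalette_three hn hn_odd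
  | succ k ih =>
    refine ih.prepend_two_rows_Icc (by omega) (by omega) ?_ ?_ ?_ ?_ fun i _ ↦ ?_ <;> intro j _
    · simp [oddPalette, pathDegree]
    · simp [oddPalette, pathDegree]
    · simp [oddPalette, pathDegree]
    · simp [oddPalette, pathDegree]
    · simp only [oddPalette, mul_add_one, pathDegree_add_two_add_three]
      grind

lemma card_oddPalette {m : ℕ} (hm : 3 ≤ m) (n i j : ℕ) :
    #(oddPalette m n i j) = pathDegree m i + pathDegree n j := by
  rw [oddPalette]
  split_ifs with h₁ h₂
  · rw [pathDegree_eq_one_iff.2 (.inr h₁.1), pathDegree_eq_one_iff.2 (.inr h₁.2)]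
    rfl
  · rw [pathDegree_eq_one_iff.2 h₂.2, pathDegree, if_neg (by omega)]
    rfl
  · simp

lemma oddPalette_mem (m n i j : ℕ) :
    oddPalette m n i j ∈ ({Icc 1 2, Icc 1 3, Icc 1 4, {3, 4}, {1, 2, 4}} : Finset (Finset ℕ)) := by
  rw [oddPalette]
  split_ifs
  · simp
  · simp
  · obtain hi | hi := pathDegree_eq_one_or_two m i <;>
      obtain hj | hj := pathDegree_eq_one_or_two n j <;> simp [hi, hj]

lemma paletteIndex_grid_le_five {m n : ℕ} (hm : 3 ≤ m) (hn : 3 ≤ n) (hm_odd : Odd m)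
    (hn_odd : Odd n) : paletteIndex (pathGraph m □ pathGraph n) ≤ 5 := by
  obtain ⟨c, hc⟩ := (isGridPaletteMap_oddPalette hm hn hm_odd hn_odd).exists_paletteFinset_eq
  have hproper : IsProperEdgeColoring (pathGraph m □ pathGraph n) c :=
    isProperEdgeColoring_iff_card_paletteFinset.2 fun p ↦ by
      rw [hc, card_oddPalette hm, degree_grid (by omega) (by omega)]
  exact (paletteIndex_le_card hproper fun p ↦ hc p ▸ oddPalette_mem m n p.1 p.2).trans card_le_five

end OddUpperBound

/-- The palette index of the grid `G(m,n)`, the Cartesian product of paths on `m`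
and `n` vertices, for `m, n ≥ 2`. -/
theorem palette_index_grid (m n : ℕ) (hm : 2 ≤ m) (hn : 2 ≤ n) :
    paletteIndex ((pathGraph m) □ (pathGraph n)) =
      if m = 2 ∧ n = 2 then 1
      else if min m n = 2 then 2
      else if Even (m * n) then 3
      else 5 := by
  by_cases h_even : Even (m * n)
  · rw [paletteIndex_grid_of_even hm hn h_even, card_image_degree_grid hm hn, if_pos h_even]
  · obtain ⟨hm_odd, hn_odd⟩ := Nat.odd_mul.1 (Nat.not_even_iff_odd.1 h_even)
    have hm_three : 3 ≤ m := by grind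
    have hn_three : 3 ≤ n := by grind
    rw [if_neg (by omega), if_neg (by omega), if_neg h_even]
    exact le_antisymm (paletteIndex_grid_le_five hm_three hn_three hm_odd hn_odd)
      (five_le_paletteIndex_grid hm_three hn_three hm_odd hn_odd)
end

section
/- For every integer r ≥ 2, if G is a (2,2r)-biregular bipartite graph, then š(G) = r + 1. -/
open SimpleGraph Finset

/-- `G` is `(a,b)`-biregular: bipartite with nonempty parts `(X, Y)` such that every
vertex in `X` has degree `a` and every vertex in `Y` has degree `b`. -/
def IsBiregular {V : Type*} [Fintype V] (G : SimpleGraph V) [DecidableRel G.Adj] (a b : ℕ) : Prop :=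
  ∃ X Y : Finset V, X.Nonempty ∧ Y.Nonempty ∧ Disjoint X Y ∧ (∀ v : V, v ∈ X ∨ v ∈ Y) ∧
    (∀ v w, G.Adj v w → (v ∈ X ∧ w ∈ Y) ∨ (v ∈ Y ∧ w ∈ X)) ∧
    (∀ v ∈ X, G.degree v = a) ∧ (∀ v ∈ Y, G.degree v = b)

/-!
Let `G` be `(2, 2r)`-biregular with parts `X` and `Y`. The `2r` colors at a vertex of `Y` are
covered by the two-element palettes of its neighbors, so at least `r` palettes occur on `X`, and a
palette of size `2r ≠ 2` occurs on `Y`.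

Conversely, pair up the edges at every vertex of `Y`, and pair the two edges at every vertex of
`X`. These are two fixed-point-free involutions of the edge set, whose union is a disjoint union
of even cycles (possibly of length two). Alternating along them splits the edges into two classes
such that every `x : X` has one edge of each class and every `y : Y` has `r` edges of each class.
Regarding `x` as an arc joining its two neighbors, this is an Eulerian orientation of a
`2r`-regular multigraph on `Y`, and Hall's theorem decomposes its arcs into `r` one-factors. Color
an edge at `x` with `2 * i` or `2 * i + 1`, where `i` is the one-factor containing the arc `x` and
the parity is the class of the edge. Then the palettes on `X` are pairs `{2 * i, 2 * i + 1}` with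
`i < r`, and the palette of every vertex of `Y` is `{0, …, 2 * r - 1}`.
-/

section Involutions

variable {E : Type*} {σ τ : Equiv.Perm E}

theorem exists_bool_apply_eq_not {Q : Type*} {σ : Q → Q} (hσ : Function.Involutive σ)
    (hfix : ∀ a, σ a ≠ a) : ∃ f : Q → Bool, ∀ a, f (σ a) = !f a := by
  classical
  obtain ⟨_⟩ : Nonempty (LinearOrder Q) := ⟨linearOrderOfSTO WellOrderingRel⟩
  refine ⟨fun a => decide (a < σ a), fun a => ?_⟩
  rcases (hfix a).lt_or_gt with h | h <;> simp [hσ a, h, h.not_gt]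

theorem semiconjBy_mul_inv_of_mul_self_eq_one {M : Type*} [Group M] {a b : M}
    (ha : a * a = 1) (hb : b * b = 1) : SemiconjBy a (a * b) (a * b)⁻¹ := by
  have ha' : a⁻¹ = a := inv_eq_of_mul_eq_one_left ha
  have hb' : b⁻¹ = b := inv_eq_of_mul_eq_one_left hb
  simp only [SemiconjBy, mul_inv_rev, ha', hb', mul_assoc, ha, mul_one, ← mul_assoc a a, one_mul]

theorem apply_mul_zpow_apply (hσ : σ * σ = 1) (hτ : τ * τ = 1) (k : ℤ) (e : E) :
    σ (((σ * τ) ^ k) e) = ((σ * τ) ^ (-k)) (σ e) := by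
  have h := (semiconjBy_mul_inv_of_mul_self_eq_one hσ hτ).zpow_right k
  rw [inv_zpow'] at h
  exact Equiv.ext_iff.1 h e

-- `σ⁻¹ (σ τ)ᵏ` is a conjugate of `σ` or of `τ`, according to the parity of `k`.
theorem not_sameCycle_mul_apply (hσ : σ * σ = 1) (hτ : τ * τ = 1)
    (hσfix : ∀ e, σ e ≠ e) (hτfix : ∀ e, τ e ≠ e) (e : E) :
    ¬ (σ * τ).SameCycle e (σ e) := by
  rintro ⟨k, hk⟩
  have hmid (m : ℤ) : σ (((σ * τ) ^ m) e) = ((σ * τ) ^ (k - m)) e := by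
    rw [apply_mul_zpow_apply hσ hτ, ← hk, ← Equiv.Perm.mul_apply, ← zpow_add, neg_add_eq_sub]
  obtain ⟨m, rfl | rfl⟩ := Int.even_or_odd' k
  · refine hσfix (((σ * τ) ^ m) e) ?_
    rw [hmid, show 2 * m - m = m by ring]
  · refine hτfix (((σ * τ) ^ m) e) (σ.injective ?_)
    rw [hmid, show 2 * m + 1 - m = 1 + m by ring, zpow_one_add]
    rfl

theorem sameCycle_mul_apply_apply (hσ : σ * σ = 1) (hτ : τ * τ = 1) {a b : E}
    (h : (σ * τ).SameCycle a b) : (σ * τ).SameCycle (σ a) (σ b) := by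
  obtain ⟨k, rfl⟩ := h
  exact ⟨-k, (apply_mul_zpow_apply hσ hτ k a).symm⟩

theorem exists_bool_apply_eq_not_of_two_perm (hσ : σ * σ = 1) (hτ : τ * τ = 1)
    (hσfix : ∀ e, σ e ≠ e) (hτfix : ∀ e, τ e ≠ e) :
    ∃ f : E → Bool, (∀ e, f (σ e) = !f e) ∧ ∀ e, f (τ e) = !f e := by
  let cycles := Equiv.Perm.SameCycle.setoid (σ * τ)
  let cycle : E → Quotient cycles := Quotient.mk cycles
  let σ' : Quotient cycles → Quotient cycles :=
    Quotient.map σ fun _ _ => sameCycle_mul_apply_apply hσ hτ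
  have hσ' : Function.Involutive σ' := by
    rintro ⟨e⟩
    exact congrArg cycle (Equiv.ext_iff.1 hσ e)
  have hσ'fix : ∀ a, σ' a ≠ a := by
    rintro ⟨e⟩ h
    exact not_sameCycle_mul_apply hσ hτ hσfix hτfix e (Quotient.exact h).symm
  obtain ⟨f, hf⟩ := exists_bool_apply_eq_not hσ' hσ'fix
  have hcycle (e : E) : cycle (τ e) = cycle (σ e) := by
    refine Quotient.sound ⟨1, ?_⟩
    rw [zpow_one, Equiv.Perm.mul_apply, ← Equiv.Perm.mul_apply τ τ, hτ, Equiv.Perm.one_apply]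
  exact ⟨f ∘ cycle, fun e => hf (cycle e),
    fun e => (congrArg f (hcycle e)).trans (hf (cycle e))⟩

theorem exists_perm_mul_self_eq_one_of_even_card {α : Type*} [Fintype α]
    (h : Even (Fintype.card α)) : ∃ σ : Equiv.Perm α, σ * σ = 1 ∧ ∀ a, σ a ≠ a := by
  obtain ⟨k, hk⟩ := h
  obtain ⟨φ⟩ : Nonempty (Fin k ⊕ Fin k ≃ α) := Fintype.card_eq.1 (by simp [hk])
  refine ⟨φ.permCongr (Equiv.sumComm _ _), ?_, fun a => ?_⟩
  · ext a
    simp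
  · obtain ⟨i | i, rfl⟩ := φ.surjective a <;> simp

theorem exists_perm_mul_self_eq_one_of_even_card_fiber {Y : Type*} [Fintype E] [DecidableEq Y]
    {q : E → Y} (h : ∀ y, Even #{e | q e = y}) :
    ∃ σ : Equiv.Perm E, σ * σ = 1 ∧ (∀ e, σ e ≠ e) ∧ ∀ e, q (σ e) = q e := by
  have hfiber (y : Y) : Even (Fintype.card {e // q e = y}) := by
    simpa only [Fintype.card_subtype] using h y
  choose g hg hgfix using fun y => exists_perm_mul_self_eq_one_of_even_card (hfiber y)
  let φ := Equiv.sigmaFiberEquiv q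
  have hq (a : Σ y, {e // q e = y}) : q (φ a) = a.1 := a.2.2
  refine ⟨φ.permCongr (Equiv.Perm.sigmaCongrRight g), ?_, fun e => ?_, fun e => ?_⟩
  · have hg1 : g * g = 1 := funext hg
    ext e
    have := congrArg φ (Equiv.ext_iff.1 (congrArg (Equiv.Perm.sigmaCongrRight) hg1) (φ.symm e))
    simpa using this
  · obtain ⟨⟨y, e⟩, rfl⟩ := φ.surjective e
    simpa using hgfix y e
  · obtain ⟨⟨y, e⟩, rfl⟩ := φ.surjective e
    simp [hq]

theorem two_mul_card_filter_eq_of_apply_eq_not [Fintype E] {Y : Type*} [DecidableEq Y]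
    {q : E → Y} {f : E → Bool} (hq : ∀ e, q (σ e) = q e) (hf : ∀ e, f (σ e) = !f e)
    (y : Y) (b : Bool) : 2 * #{e | f e = b ∧ q e = y} = #{e | q e = y} := by
  have hswap : #{e | f e = b ∧ q e = y} = #{e | ¬ f e = b ∧ q e = y} :=
    card_bijective σ σ.bijective fun e => by
      cases b <;> simp [hq, hf]
  rw [← card_filter_add_card_filter_not (s := {e | q e = y}) (fun e => f e = b), filter_filter,
    filter_filter]
  simp only [and_comm (a := q _ = y), ← hswap, two_mul]

theorem exists_bool_two_mul_card_filter_eq {X Y : Type*} [Fintype E] [DecidableEq X]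
    [DecidableEq Y] {p : E → X} {q : E → Y} (hp : ∀ x, Even #{e | p e = x})
    (hq : ∀ y, Even #{e | q e = y}) :
    ∃ f : E → Bool, (∀ x b, 2 * #{e | f e = b ∧ p e = x} = #{e | p e = x}) ∧
      ∀ y b, 2 * #{e | f e = b ∧ q e = y} = #{e | q e = y} := by
  obtain ⟨τ, hτ, hτfix, hpτ⟩ := exists_perm_mul_self_eq_one_of_even_card_fiber hp
  obtain ⟨σ, hσ, hσfix, hqσ⟩ := exists_perm_mul_self_eq_one_of_even_card_fiber hq
  obtain ⟨f, hfσ, hfτ⟩ := exists_bool_apply_eq_not_of_two_perm hσ hτ hσfix hτfix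
  exact ⟨f, two_mul_card_filter_eq_of_apply_eq_not hpτ hfτ,
    two_mul_card_filter_eq_of_apply_eq_not hqσ hfσ⟩

end Involutions

section Fibers

variable {E Y Z : Type*} [DecidableEq Y] [DecidableEq Z]

/-- `f` is `k`-to-one on the finite set `s`: every point of the codomain has exactly `k` preimages
in `s`. When `E` is the edge set of a multigraph and `f` assigns to each edge its endpoint in one
side of a bipartition, this says that all vertices on that side have degree `k` in the subgraph
with edge set `s`. -/
def IsToOneOn (f : E → Y) (k : ℕ) (s : Finset E) : Prop :=
  ∀ y, #{e ∈ s | f e = y} = k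

namespace IsToOneOn

variable {f : E → Y} {g : E → Z} {k l : ℕ} {s t : Finset E}

theorem card_filter_mem (hf : IsToOneOn f k s) (T : Finset Y) :
    #{e ∈ s | f e ∈ T} = #T * k := by
  rw [← sum_card_fiberwise_eq_card_filter, sum_const_nat fun y _ => hf y]

theorem card_eq [Fintype Y] (hf : IsToOneOn f k s) : #s = Fintype.card Y * k := by
  simpa using hf.card_filter_mem univ

theorem eq_empty (hf : IsToOneOn f 0 s) : s = ∅ :=
  eq_empty_of_forall_notMem fun e he =>
    filter_eq_empty_iff.1 (card_eq_zero.1 (hf (f e))) he rfl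

theorem exists_mem_eq (hf : IsToOneOn f (k + 1) s) (y : Y) : ∃ e ∈ s, f e = y := by
  have hpos : 0 < #{e ∈ s | f e = y} := (hf y).symm ▸ k.succ_pos
  simpa only [card_pos, filter_nonempty_iff] using hpos

theorem finite (hf : IsToOneOn f (k + 1) s) : Finite Y :=
  Finite.of_surjective (fun e : s => f e) fun y =>
    let ⟨e, he, hfe⟩ := hf.exists_mem_eq y
    ⟨⟨e, he⟩, hfe⟩

theorem sdiff [DecidableEq E] (hs : IsToOneOn f (k + l) s) (ht : IsToOneOn f l t) (hts : t ⊆ s) :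
    IsToOneOn f k (s \ t) := fun y => by
  have hfilter : ({e ∈ s \ t | f e = y} : Finset E) = {e ∈ s | f e = y} \ {e ∈ t | f e = y} := by
    grind
  rw [hfilter, card_sdiff_of_subset (filter_subset_filter _ hts), hs y, ht y, Nat.add_sub_cancel]

theorem injOn (hf : IsToOneOn f 1 s) : Set.InjOn f s := fun e he e' he' h =>
  card_le_one.1 (hf (f e')).le e (mem_filter.2 ⟨he, h⟩) e' (mem_filter.2 ⟨he', rfl⟩)

theorem of_bijective_comp [DecidableEq E] {I : Type*} [Fintype I] {m : I → E}
    (h : Function.Bijective (f ∘ m)) : IsToOneOn f 1 (univ.image m) := fun y => by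
  obtain ⟨i, rfl⟩ := h.surjective y
  refine card_eq_one.2 ⟨m i, ?_⟩
  ext e
  simp only [mem_filter, mem_image, mem_univ, true_and, mem_singleton]
  constructor
  · rintro ⟨⟨i', rfl⟩, hi⟩
    rw [h.injective hi]
  · rintro rfl
    exact ⟨⟨i, rfl⟩, rfl⟩

theorem card_le_card_filter_exists [Fintype Z] (hf : IsToOneOn f (k + 1) s)
    (hg : IsToOneOn g (k + 1) s) (T : Finset Y) :
    #T ≤ #{z | ∃ y ∈ T, ∃ e ∈ s, f e = y ∧ g e = z} := by
  have hsub : ({e ∈ s | f e ∈ T} : Finset E) ⊆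
      {e ∈ s | g e ∈ ({z | ∃ y ∈ T, ∃ e ∈ s, f e = y ∧ g e = z} : Finset Z)} := by
    grind
  have hcard := card_le_card hsub
  rw [hf.card_filter_mem, hg.card_filter_mem] at hcard
  exact Nat.le_of_mul_le_mul_right hcard k.succ_pos

theorem exists_perfectMatching (hf : IsToOneOn f (k + 1) s) (hg : IsToOneOn g (k + 1) s) :
    ∃ t ⊆ s, IsToOneOn f 1 t ∧ IsToOneOn g 1 t := by
  classical
  have := hf.finite
  have := hg.finite
  have := Fintype.ofFinite Y
  have := Fintype.ofFinite Z
  obtain ⟨φ, hφ, hedge⟩ := (Fintype.all_card_le_filter_rel_iff_exists_injective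
    fun y z => ∃ e ∈ s, f e = y ∧ g e = z).1 (hf.card_le_card_filter_exists hg)
  have hcard : Fintype.card Y = Fintype.card Z :=
    Nat.eq_of_mul_eq_mul_right k.succ_pos (hf.card_eq.symm.trans hg.card_eq)
  choose m hms hfm hgm using hedge
  have hfm' : f ∘ m = id := funext hfm
  have hgm' : g ∘ m = φ := funext hgm
  exact ⟨univ.image m, image_subset_iff.2 fun y _ => hms y,
    of_bijective_comp (hfm' ▸ Function.bijective_id),
    of_bijective_comp (hgm' ▸ (Fintype.bijective_iff_injective_and_card φ).2 ⟨hφ, hcard⟩)⟩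

theorem injOn_prodMk_ite [DecidableEq E] {j : E → ℕ} (ht : IsToOneOn f 1 t)
    (hlt : ∀ e ∈ s \ t, j e < k) (hj : Set.InjOn (fun e => (f e, j e)) ↑(s \ t)) :
    Set.InjOn (fun e => (f e, if e ∈ t then k else j e)) s := by
  intro e he e' he' h
  have hfe : f e = f e' := congrArg Prod.fst h
  have hlt' := hlt e
  have hlt'' := hlt e'
  have hinj : e ∈ s \ t → e' ∈ s \ t → j e = j e' → e = e' := fun h₁ h₂ h₃ =>
    hj h₁ h₂ (Prod.ext hfe h₃)
  have hinj' : e ∈ t → e' ∈ t → e = e' := fun h₁ h₂ => ht.injOn h₁ h₂ hfe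
  grind

-- König's edge-colouring theorem for regular bipartite multigraphs.
theorem exists_edgeColoring (hf : IsToOneOn f k s) (hg : IsToOneOn g k s) :
    ∃ j : E → ℕ, (∀ e ∈ s, j e < k) ∧ Set.InjOn (fun e => (f e, j e)) s ∧
      Set.InjOn (fun e => (g e, j e)) s := by
  classical
  induction k generalizing s with
  | zero => exact ⟨0, by simp [hf.eq_empty]⟩
  | succ k ih =>
    obtain ⟨t, hts, hft, hgt⟩ := hf.exists_perfectMatching hg
    obtain ⟨j, hlt, hjf, hjg⟩ := ih (hf.sdiff hft hts) (hg.sdiff hgt hts)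
    refine ⟨fun e => if e ∈ t then k else j e, fun e he => ?_,
      hft.injOn_prodMk_ite hlt hjf, hgt.injOn_prodMk_ite hlt hjg⟩
    have := hlt e
    grind

end IsToOneOn

end Fibers

section PairedColoring

variable {E X Y : Type*} [Fintype E] [DecidableEq X] [DecidableEq Y] {p : E → X} {q : E → Y}

theorem exists_bool_isToOneOn_filter {k l : ℕ} (hp : IsToOneOn p (2 * k) univ)
    (hq : IsToOneOn q (2 * l) univ) :
    ∃ f : E → Bool, ∀ b, IsToOneOn p k {e | f e = b} ∧ IsToOneOn q l {e | f e = b} := by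
  obtain ⟨f, hfp, hfq⟩ := exists_bool_two_mul_card_filter_eq
    (fun x => hp x ▸ even_two_mul k) (fun y => hq y ▸ even_two_mul l)
  refine ⟨f, fun b => ⟨fun x => ?_, fun y => ?_⟩⟩
  · have h := (hfp x b).trans (hp x)
    rw [filter_filter]
    lia
  · have h := (hfq y b).trans (hq y)
    rw [filter_filter]
    lia

theorem bijective_prodMk_of_isToOneOn_filter {f : E → Bool}
    (hp : ∀ b, IsToOneOn p 1 {e | f e = b}) : Function.Bijective fun e => (p e, f e) := by
  refine ⟨fun e e' h => ?_, fun ⟨x, b⟩ => ?_⟩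
  · obtain ⟨hpe, hfe⟩ := Prod.ext_iff.1 h
    exact (hp (f e')).injOn (by simpa using hfe) (by simp) hpe
  · obtain ⟨e, hfe, hpe⟩ := (hp b).exists_mem_eq x
    exact ⟨e, Prod.ext hpe (by simpa using hfe)⟩

theorem isToOneOn_comp_symm_prodMk {I J : Type*} [Fintype I] [DecidableEq J] {r : ℕ} {b : J}
    {φ : E ≃ I × J} (hq : IsToOneOn q r {e | (φ e).2 = b}) :
    IsToOneOn (fun x => q (φ.symm (x, b))) r univ := fun y => by
  rw [← hq y, filter_filter]
  refine card_bij' (fun x _ => φ.symm (x, b)) (fun e _ => (φ e).1) ?_ ?_ ?_ ?_ <;> grind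

-- `j x` is the one-factor containing the arc `x`, which joins the `q`-ends of its two edges.
theorem exists_factor_bool_edgeColoring {r : ℕ} (hp : IsToOneOn p 2 univ)
    (hq : IsToOneOn q (2 * r) univ) :
    ∃ (j : X → ℕ) (f : E → Bool), (∀ x, j x < r) ∧
      (Function.Injective fun e => (p e, f e)) ∧
      Function.Injective fun e => (q e, j (p e), f e) := by
  have := hp.finite
  have := Fintype.ofFinite X
  obtain ⟨f, hf⟩ := exists_bool_isToOneOn_filter (k := 1) hp hq
  have hpf := bijective_prodMk_of_isToOneOn_filter fun b => (hf b).1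
  let φ : E ≃ X × Bool := Equiv.ofBijective _ hpf
  have hend (b : Bool) : IsToOneOn (fun x => q (φ.symm (x, b))) r univ :=
    isToOneOn_comp_symm_prodMk (hf b).2
  obtain ⟨j, hlt, hjt, hjf⟩ := (hend true).exists_edgeColoring (hend false)
  have hj (b : Bool) : Set.InjOn (fun x => (q (φ.symm (x, b)), j x)) (univ : Finset X) := by
    cases b <;> assumption
  have hedge (e : E) : φ.symm (p e, f e) = e := φ.symm_apply_apply e
  refine ⟨j, f, fun x => hlt x (mem_univ x), hpf.injective, fun e e' h => ?_⟩
  simp only [Prod.mk.injEq] at h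
  obtain ⟨hqe, hje, hfe⟩ := h
  have hpe : p e = p e' := hj (f e) (by simp) (by simp) <| by
    dsimp only
    rw [hedge, hqe, hje, hfe, hedge]
  exact hpf.injective (Prod.ext hpe hfe)

theorem exists_paired_edgeColoring {r : ℕ} (hp : IsToOneOn p 2 univ)
    (hq : IsToOneOn q (2 * r) univ) :
    ∃ (j : X → ℕ) (c : E → ℕ), (∀ x, j x < r) ∧ (∀ e, c e / 2 = j (p e)) ∧
      (Function.Injective fun e => (p e, c e)) ∧ Function.Injective fun e => (q e, c e) := by
  obtain ⟨j, f, hlt, hpf, hqf⟩ := exists_factor_bool_edgeColoring hp hq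
  have hc_inj {e e' : E} (h : 2 * j (p e) + (f e).toNat = 2 * j (p e') + (f e').toNat) :
      j (p e) = j (p e') ∧ f e = f e' := by
    grind [Bool.toNat]
  refine ⟨j, fun e => 2 * j (p e) + (f e).toNat, hlt, fun e => ?_, fun e e' h => ?_,
    fun e e' h => ?_⟩
  · have := (f e).toNat_lt
    lia
  · obtain ⟨hpe, hce⟩ := Prod.ext_iff.1 h
    exact hpf (Prod.ext hpe (hc_inj hce).2)
  · obtain ⟨hqe, hce⟩ := Prod.ext_iff.1 h
    exact hqf (Prod.ext hqe (Prod.ext_iff.2 (hc_inj hce)))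

end PairedColoring

section Palettes

variable {V : Type*} {G : SimpleGraph V} {c : Sym2 V → ℕ}

theorem palette_eq_image_incidenceSet (v : V) : palette G c v = c '' G.incidenceSet v := by
  ext n
  simp only [palette, incidenceSet, Set.mem_image, Set.mem_ofPred_eq, and_assoc]

theorem mem_palette_of_adj {v w : V} (h : G.Adj v w) : c s(v, w) ∈ palette G c v :=
  ⟨s(v, w), h, Sym2.mem_mk_left v w, rfl⟩

theorem exists_adj_mem_palette {v : V} {n : ℕ} (hn : n ∈ palette G c v) :
    ∃ w, G.Adj v w ∧ n ∈ palette G c w := by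
  obtain ⟨e, he, ⟨w, rfl⟩, rfl⟩ := hn
  exact ⟨w, he, Sym2.eq_swap (a := w) (b := v) ▸ mem_palette_of_adj (G.adj_symm he)⟩

namespace IsProperEdgeColoring

theorem injOn_incidenceSet (hc : IsProperEdgeColoring G c) (v : V) :
    Set.InjOn c (G.incidenceSet v) := fun e he e' he' h =>
  not_imp_not.1 (fun hne => hc e he.1 e' he'.1 hne ⟨v, he.2, he'.2⟩) h

variable [G.LocallyFinite]

theorem ncard_palette (hc : IsProperEdgeColoring G c) (v : V) :
    (palette G c v).ncard = G.degree v := by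
  classical
  rw [palette_eq_image_incidenceSet, (hc.injOn_incidenceSet v).ncard_image,
    ← Nat.card_coe_set_eq, Nat.card_eq_fintype_card, card_incidenceSet_eq_degree]

theorem palette_eq_of_subset (hc : IsProperEdgeColoring G c) {v : V} {S : Finset ℕ}
    (hsub : palette G c v ⊆ S) (hcard : #S ≤ G.degree v) : palette G c v = S :=
  Set.eq_of_subset_of_ncard_le hsub (by rwa [Set.ncard_coe_finset, hc.ncard_palette])

theorem degree_le_mul_ncard_image_neighborSet (hc : IsProperEdgeColoring G c) {v : V} {a : ℕ}
    (ha : ∀ w, G.Adj v w → G.degree w ≤ a) :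
    G.degree v ≤ a * (palette G c '' G.neighborSet v).ncard := by
  classical
  let S : Finset (Set ℕ) := (G.neighborFinset v).image (palette G c)
  have hS : (S : Set (Set ℕ)) = palette G c '' G.neighborSet v := by simp [S]
  have hcover : palette G c v ⊆ ⋃ P ∈ S, P := fun n hn => by
    obtain ⟨w, hvw, hnw⟩ := exists_adj_mem_palette hn
    simp only [Set.mem_iUnion]
    exact ⟨palette G c w, mem_image_of_mem _ ((mem_neighborFinset ..).2 hvw), hnw⟩
  have hcard : ∀ P ∈ S, P.Finite ∧ P.ncard ≤ a := by
    simp only [S, forall_mem_image, mem_neighborFinset]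
    intro w hvw
    refine ⟨?_, (hc.ncard_palette w).trans_le (ha w hvw)⟩
    rw [palette_eq_image_incidenceSet]
    exact (Set.toFinite (G.incidenceSet w)).image c
  calc G.degree v = (palette G c v).ncard := (hc.ncard_palette v).symm
    _ ≤ (⋃ P ∈ S, P).ncard :=
      Set.ncard_le_ncard hcover (S.finite_toSet.biUnion fun P hP => (hcard P hP).1)
    _ ≤ ∑ P ∈ S, P.ncard := set_ncard_biUnion_le S id
    _ ≤ #S * a := sum_le_card_nsmul S _ a fun P hP => (hcard P hP).2
    _ = a * (palette G c '' G.neighborSet v).ncard := by rw [← hS, Set.ncard_coe_finset, mul_comm]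

theorem degree_add_le_mul_ncard_range_palette [Finite V] (hc : IsProperEdgeColoring G c) {v : V}
    {a : ℕ} (ha : ∀ w, G.Adj v w → G.degree w ≤ a) (hv : a < G.degree v) :
    G.degree v + a ≤ a * (Set.range (palette G c)).ncard := by
  have hnotMem : palette G c v ∉ palette G c '' G.neighborSet v := by
    rintro ⟨w, hvw, h⟩
    have hdeg : G.degree w = G.degree v := by rw [← hc.ncard_palette, h, hc.ncard_palette]
    exact (ha w hvw).not_gt (hdeg ▸ hv)
  have hsub : insert (palette G c v) (palette G c '' G.neighborSet v) ⊆ Set.range (palette G c) :=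
    Set.insert_subset (Set.mem_range_self v) (Set.image_subset_range _ _)
  calc G.degree v + a ≤ a * ((palette G c '' G.neighborSet v).ncard + 1) := by
        rw [mul_add_one]
        gcongr
        exact hc.degree_le_mul_ncard_image_neighborSet ha
    _ ≤ a * (Set.range (palette G c)).ncard := by
        rw [← Set.ncard_insert_of_notMem hnotMem]
        gcongr
        exact Set.toFinite _

end IsProperEdgeColoring

end Palettes

section Bipartite

variable {V : Type*} {G : SimpleGraph V}

theorem exists_edge_endpoint {X Y : Finset V} (h : G.IsBipartiteWith X Y) :
    ∃ p : G.edgeSet → X, ∀ e x, p e = x ↔ (x : V) ∈ (e : Sym2 V) := by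
  have huniq : ∀ e : G.edgeSet, ∃ x : X, ∀ x' : X, x = x' ↔ (x' : V) ∈ (e : Sym2 V) := by
    rintro ⟨⟨v, w⟩, hvw⟩
    have hdisj := Finset.disjoint_left.1 (disjoint_coe.1 h.disjoint)
    rcases h.mem_of_adj hvw with ⟨hv, hw⟩ | ⟨hv, hw⟩
    · exact ⟨⟨v, hv⟩, fun ⟨x, hx⟩ => by grind⟩
    · exact ⟨⟨w, hw⟩, fun ⟨x, hx⟩ => by grind⟩
  choose p hp using huniq
  exact ⟨p, hp⟩

theorem card_filter_mem_edge [Fintype G.edgeSet] [DecidableEq V] (v : V)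
    [Fintype (G.neighborSet v)] : #{e : G.edgeSet | v ∈ (e : Sym2 V)} = G.degree v := by
  rw [← card_incidenceFinset_eq_degree, ← card_map (Function.Embedding.subtype _)]
  congr 1
  ext e
  simp [incidenceSet, and_comm]

theorem isToOneOn_endpoint [Fintype G.edgeSet] [G.LocallyFinite] [DecidableEq V] {X : Finset V}
    {p : G.edgeSet → X} (hp : ∀ e x, p e = x ↔ (x : V) ∈ (e : Sym2 V)) {a : ℕ}
    (hdeg : ∀ x ∈ X, G.degree x = a) : IsToOneOn p a univ := fun x => by
  simp only [hp, card_filter_mem_edge, hdeg x x.2]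

theorem exists_isProperEdgeColoring_of_edgeSet {c : G.edgeSet → ℕ}
    (hc : ∀ v (e e' : G.edgeSet), v ∈ (e : Sym2 V) → v ∈ (e' : Sym2 V) → c e = c e' → e = e') :
    ∃ c' : Sym2 V → ℕ, IsProperEdgeColoring G c' ∧ ∀ e : G.edgeSet, c' e = c e := by
  let c' : Sym2 V → ℕ := Function.extend Subtype.val c 0
  have hc' (e : G.edgeSet) : c' e = c e := Subtype.val_injective.extend_apply c 0 e
  refine ⟨c', ?_, hc'⟩
  rintro e he e' he' hne ⟨v, hv, hv'⟩ h
  refine hne (congrArg Subtype.val (hc v ⟨e, he⟩ ⟨e', he'⟩ hv hv' ?_))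
  rw [← hc', ← hc', h]

theorem exists_isProperEdgeColoring_of_isBipartiteWith [Finite G.edgeSet] [G.LocallyFinite]
    {X Y : Finset V} (h : G.IsBipartiteWith X Y) (hcover : ∀ v, v ∈ X ∨ v ∈ Y) {r : ℕ}
    (hX : ∀ v ∈ X, G.degree v = 2) (hY : ∀ v ∈ Y, G.degree v = 2 * r) :
    ∃ c : Sym2 V → ℕ, IsProperEdgeColoring G c ∧
      (∀ v ∈ X, ∃ i < r, palette G c v ⊆ ({2 * i, 2 * i + 1} : Finset ℕ)) ∧
      ∀ v ∈ Y, palette G c v ⊆ range (2 * r) := by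
  classical
  have := Fintype.ofFinite G.edgeSet
  obtain ⟨p, hp⟩ := exists_edge_endpoint h
  obtain ⟨q, hq⟩ := exists_edge_endpoint h.symm
  obtain ⟨j, color, hlt, hj, hpc, hqc⟩ :=
    exists_paired_edgeColoring (isToOneOn_endpoint hp hX) (isToOneOn_endpoint hq hY)
  obtain ⟨c, hc, hcolor⟩ := exists_isProperEdgeColoring_of_edgeSet (c := color) <| by
    intro v e e' hve hve' heq
    rcases hcover v with hv | hv
    · have hpe : p e = p e' := ((hp e ⟨v, hv⟩).2 hve).trans ((hp e' ⟨v, hv⟩).2 hve').symm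
      exact hpc (Prod.ext hpe heq)
    · have hqe : q e = q e' := ((hq e ⟨v, hv⟩).2 hve).trans ((hq e' ⟨v, hv⟩).2 hve').symm
      exact hqc (Prod.ext hqe heq)
  refine ⟨c, hc, fun v hv => ⟨j ⟨v, hv⟩, hlt _, ?_⟩, fun v _ => ?_⟩
  · rintro _ ⟨e, he, hve, rfl⟩
    have hpe : p ⟨e, he⟩ = ⟨v, hv⟩ := (hp ⟨e, he⟩ ⟨v, hv⟩).2 hve
    have hje := hj ⟨e, he⟩
    rw [hpe] at hje
    rw [hcolor ⟨e, he⟩, mem_coe, mem_insert, mem_singleton]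
    lia
  · rintro _ ⟨e, he, -, rfl⟩
    have hje := hj ⟨e, he⟩
    have hlt_e := hlt (p ⟨e, he⟩)
    rw [hcolor ⟨e, he⟩, mem_coe, mem_range]
    lia

end Bipartite

namespace IsBiregular

variable {V : Type*} [Fintype V] {G : SimpleGraph V} [DecidableRel G.Adj]

theorem add_le_mul_ncard_range_palette {a b : ℕ} (hG : IsBiregular G a b) (hab : a < b)
    {c : Sym2 V → ℕ} (hc : IsProperEdgeColoring G c) :
    b + a ≤ a * (Set.range (palette G c)).ncard := by
  obtain ⟨X, Y, -, ⟨y, hy⟩, hdisj, -, hadj, hX, hY⟩ := hG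
  have hneighbor (w : V) (hyw : G.Adj y w) : G.degree w ≤ a := by
    rcases hadj y w hyw with ⟨hyX, -⟩ | ⟨-, hw⟩
    · exact absurd hy (Finset.disjoint_left.1 hdisj hyX)
    · exact (hX w hw).le
  have h := hc.degree_add_le_mul_ncard_range_palette hneighbor ((hY y hy).symm ▸ hab)
  rwa [hY y hy] at h

theorem exists_isProperEdgeColoring_ncard_range_palette_le {r : ℕ}
    (hG : IsBiregular G 2 (2 * r)) :
    ∃ c, IsProperEdgeColoring G c ∧ (Set.range (palette G c)).ncard ≤ r + 1 := by
  classical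
  obtain ⟨X, Y, -, -, hdisj, hcover, hadj, hX, hY⟩ := hG
  obtain ⟨c, hc, hcX, hcY⟩ := exists_isProperEdgeColoring_of_isBipartiteWith
    ⟨disjoint_coe.2 hdisj, hadj⟩ hcover hX hY
  let pair : ℕ → Set ℕ := fun i => ({2 * i, 2 * i + 1} : Finset ℕ)
  let palettes : Finset (Set ℕ) := insert ↑(range (2 * r)) ((range r).image pair)
  have hpalettes : Set.range (palette G c) ⊆ palettes := by
    rintro _ ⟨v, rfl⟩
    rcases hcover v with hv | hv
    · obtain ⟨i, hi, hsub⟩ := hcX v hv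
      have hpair : palette G c v = pair i :=
        hc.palette_eq_of_subset hsub (by rw [hX v hv]; exact card_le_two)
      exact mem_insert_of_mem (mem_image.2 ⟨i, mem_range.2 hi, hpair.symm⟩)
    · rw [hc.palette_eq_of_subset (hcY v hv) (by rw [hY v hv, card_range])]
      exact mem_insert_self _ _
  refine ⟨c, hc, ?_⟩
  calc (Set.range (palette G c)).ncard ≤ #palettes := by
        rw [← Set.ncard_coe_finset]
        exact Set.ncard_le_ncard hpalettes
    _ ≤ #((range r).image pair) + 1 := card_insert_le _ _
    _ ≤ r + 1 := by simpa using card_image_le (s := range r) (f := pair)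

end IsBiregular

/-- If `G` is a `(2,2r)`-biregular graph, then `š(G) = r + 1`. -/
theorem palette_index_two_twoR_biregular {V : Type*} [Fintype V]
    (G : SimpleGraph V) [DecidableRel G.Adj] (r : ℕ) (hr : 2 ≤ r)
    (hG : IsBiregular G 2 (2 * r)) :
    paletteIndex G = r + 1 := by
  have hlower {c : Sym2 V → ℕ} (hc : IsProperEdgeColoring G c) :
      r + 1 ≤ (Set.range (palette G c)).ncard := by
    have h := hG.add_le_mul_ncard_range_palette (by lia) hc
    lia
  obtain ⟨c, hc, hupper⟩ := hG.exists_isProperEdgeColoring_ncard_range_palette_le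
  refine IsLeast.csInf_eq ⟨⟨c, hc, hupper.antisymm (hlower hc)⟩, ?_⟩
  rintro _ ⟨c', hc', rfl⟩
  exact hlower hc'
end
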